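/- Let E be a simplicial commutative k-algebra whose Moore complex satisfies NE_4 = 0. Then for all x_2 ∈ NE_2 and y_3 ∈ NE_3 the following identity holds in E_3: s_2 x_2 · (s_1 d_3 y_3 − s_2 d_3 y_3 + y_3) = 0. -/

import Mathlib

/-! Put `w = s₃ s₂ x₂ * (s₁ y₃ - s₂ y₃ + s₃ y₃)` in `E₄`. The faces `d₀`, `d₁` kill the first factor,
because `d₀ x₂ = d₁ x₂ = 0`; the faces `d₂`, `d₃` kill the second factor, because `d₂ y₃ = 0` and the two
remaining terms cancel. So `w` lies in `NE₄ = 0`, and the identity is `d₄ w = 0`. -/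


/-- A simplicial commutative `k`-algebra: a family of commutative `k`-algebras
`obj n` together with face algebra homomorphisms `d n i : obj (n+1) →ₐ[k] obj n`
(representing `d_i : E_{n+1} → E_n`, `0 ≤ i ≤ n+1`) and degeneracy algebra
homomorphisms `s n i : obj n →ₐ[k] obj (n+1)` (representing
`s_i : E_n → E_{n+1}`, `0 ≤ i ≤ n`), satisfying the simplicial identities. -/
structure SimplicialCommAlg (k : Type*) [CommRing k]
    (obj : ℕ → Type*) [∀ n, CommRing (obj n)] [∀ n, Algebra k (obj n)] where
  d : (n : ℕ) → ℕ → (obj (n + 1) →ₐ[k] obj n)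
  s : (n : ℕ) → ℕ → (obj n →ₐ[k] obj (n + 1))
  dd : ∀ (n i j : ℕ), i < j → j ≤ n + 2 →
    (d n i).comp (d (n + 1) j) = (d n (j - 1)).comp (d (n + 1) i)
  ds_lt : ∀ (m i j : ℕ), i < j → j ≤ m + 1 →
    (d (m + 1) i).comp (s (m + 1) j) = (s m (j - 1)).comp (d m i)
  ds_self : ∀ (n j : ℕ), j ≤ n → (d n j).comp (s n j) = AlgHom.id k (obj n)
  ds_succ : ∀ (n j : ℕ), j ≤ n → (d n (j + 1)).comp (s n j) = AlgHom.id k (obj n)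
  ds_gt : ∀ (m i j : ℕ), j + 1 < i → i ≤ m + 2 →
    (d (m + 1) i).comp (s (m + 1) j) = (s m j).comp (d m (i - 1))
  ss : ∀ (n i j : ℕ), i ≤ j → j ≤ n →
    (s (n + 1) i).comp (s n j) = (s (n + 1) (j + 1)).comp (s n i)

theorem stmt_12 {k : Type*} [CommRing k] {obj : ℕ → Type*}
    [∀ n, CommRing (obj n)] [∀ n, Algebra k (obj n)]
    (E : SimplicialCommAlg k obj)
    (hNE4 : ∀ w : obj 4, E.d 3 0 w = 0 → E.d 3 1 w = 0 →
      E.d 3 2 w = 0 → E.d 3 3 w = 0 → w = 0)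
    (x2 : obj 2) (hx2 : E.d 1 0 x2 = 0 ∧ E.d 1 1 x2 = 0) (y3 : obj 3) (hy3 : E.d 2 0 y3 = 0 ∧ E.d 2 1 y3 = 0 ∧ E.d 2 2 y3 = 0) :
    E.s 2 2 x2 * (E.s 2 1 (E.d 2 3 y3) - E.s 2 2 (E.d 2 3 y3) + y3) = 0 := by
  obtain ⟨hx0, hx1⟩ := hx2
  obtain ⟨-, -, hy2⟩ := hy3
  -- The simplicial identities, evaluated at elements.
  have lt (m i j : ℕ) (h : i < j) (h' : j ≤ m + 1) (a : obj (m + 1)) :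
      E.d (m + 1) i (E.s (m + 1) j a) = E.s m (j - 1) (E.d m i a) :=
    DFunLike.congr_fun (E.ds_lt m i j h h') a
  have self (n j : ℕ) (h : j ≤ n) (a : obj n) : E.d n j (E.s n j a) = a :=
    DFunLike.congr_fun (E.ds_self n j h) a
  have succ (n j : ℕ) (h : j ≤ n) (a : obj n) : E.d n (j + 1) (E.s n j a) = a :=
    DFunLike.congr_fun (E.ds_succ n j h) a
  have gt (m i j : ℕ) (h : j + 1 < i) (h' : i ≤ m + 2) (a : obj (m + 1)) :
      E.d (m + 1) i (E.s (m + 1) j a) = E.s m j (E.d m (i - 1) a) :=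
    DFunLike.congr_fun (E.ds_gt m i j h h') a
  have hw : E.s 3 3 (E.s 2 2 x2) * (E.s 3 1 y3 - E.s 3 2 y3 + E.s 3 3 y3) = 0 := by
    apply hNE4
    · have h : E.d 3 0 (E.s 3 3 (E.s 2 2 x2)) = 0 := by
        rw [lt 2 0 3 (by omega) (by omega), lt 1 0 2 (by omega) (by omega), hx0, map_zero, map_zero]
      rw [map_mul, h, zero_mul]
    · have h : E.d 3 1 (E.s 3 3 (E.s 2 2 x2)) = 0 := by
        rw [lt 2 1 3 (by omega) (by omega), lt 1 1 2 (by omega) (by omega), hx1, map_zero, map_zero]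
      rw [map_mul, h, zero_mul]
    · have h : E.d 3 2 (E.s 3 1 y3 - E.s 3 2 y3 + E.s 3 3 y3) = 0 := by
        rw [map_add, map_sub, succ 3 1 (by omega), self 3 2 (by omega),
          lt 2 2 3 (by omega) (by omega), hy2, map_zero, sub_self, add_zero]
      rw [map_mul, h, mul_zero]
    · have h : E.d 3 3 (E.s 3 1 y3 - E.s 3 2 y3 + E.s 3 3 y3) = 0 := by
        rw [map_add, map_sub, gt 2 3 1 (by omega) (by omega), succ 3 2 (by omega),
          self 3 3 (by omega), hy2, map_zero, zero_sub, neg_add_cancel]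
      rw [map_mul, h, mul_zero]
  have h := congrArg (E.d 3 4) hw
  rwa [map_mul, map_add, map_sub, succ 3 3 (by omega), succ 3 3 (by omega),
    gt 2 4 1 (by omega) (by omega), gt 2 4 2 (by omega) (by omega), map_zero] at h
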